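/- arXiv:2312.00650 — 6 statements merged into one kernel-verified Lean document; each statement's English description precedes it below -/
import Mathlib

section
/- Let α : G → H be an option preserving map between gamegraphs G and H. Then α maps the starting position of G to the starting position of H if and only if α is surjective on vertices. -/
/-- The set of options (out-neighbors) of a vertex `p` in the digraph with arrow
relation `E`. -/
def OptSet {V : Type*} (E : V → V → Prop) (p : V) : Set V := {q | E p q}

/-- A digraph has no infinite directed walk (i.e. it is a rulegraph). -/
def NoInfiniteWalk {V : Type*} (E : V → V → Prop) : Prop :=
  ¬ ∃ f : ℕ → V, ∀ n, E (f n) (f (n + 1))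

/-- A map `α` between digraphs is option preserving if `Opt (α p) = α '' Opt p`
for every vertex `p`. -/
def OptionPreserving {V W : Type*} (E : V → V → Prop) (F : W → W → Prop)
    (α : V → W) : Prop :=
  ∀ p, OptSet F (α p) = α '' OptSet E p

/-- A source is a vertex with no in-neighbors. -/
def IsSource {V : Type*} (E : V → V → Prop) (s : V) : Prop := ∀ q, ¬ E q s

/-- A gamegraph is a rulegraph with a unique source `s` (the starting position)
such that every vertex is a subposition of `s`. -/
def IsGamegraph {V : Type*} (E : V → V → Prop) (s : V) : Prop :=
  NoInfiniteWalk E ∧ IsSource E s ∧ (∀ t, IsSource E t → t = s) ∧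
    ∀ p, Relation.ReflTransGen E s p

/-- The equivalence class of `p` under the relation `r`. -/
def cls {V : Type*} (r : V → V → Prop) (p : V) : Set V := {x | r p x}

/-- A congruence relation on a rulegraph: an equivalence relation such that
related vertices have the same set of classes of options. -/
def IsCongruence {V : Type*} (E : V → V → Prop) (r : V → V → Prop) : Prop :=
  Equivalence r ∧ ∀ p q, r p q → cls r '' OptSet E p = cls r '' OptSet E q

/-- A rulegraph is simple if its only congruence relation is equality. -/
def IsSimple {V : Type*} (E : V → V → Prop) : Prop :=
  ∀ r : V → V → Prop, IsCongruence E r → ∀ p q, r p q → p = q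

/-- The arrow relation of the quotient digraph by a setoid `s`: there is an arrow
from `[p]` to `[q]` exactly when there are `p' ∼ p` and `q' ∼ q` with `q' ∈ Opt p'`. -/
def QuotE {V : Type*} (E : V → V → Prop) (s : Setoid V) :
    Quotient s → Quotient s → Prop :=
  fun a b => ∃ p q : V, Quotient.mk s p = a ∧ Quotient.mk s q = b ∧ E p q

section

variable {V W : Type*} {E : V → V → Prop} {F : W → W → Prop} {α : V → W}

theorem IsSource.of_map (hα : ∀ ⦃p q⦄, E p q → F (α p) (α q)) {p : V}
    (hp : IsSource F (α p)) : IsSource E p :=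
  fun q hqp ↦ hp (α q) (hα hqp)

theorem fibration_flip_reflTransGen (hα : Relation.Fibration (flip E) (flip F) α) :
    Relation.Fibration (flip (Relation.ReflTransGen E)) (flip (Relation.ReflTransGen F)) α := by
  intro p w hpw
  induction hpw with
  | refl => exact ⟨p, .refl, rfl⟩
  | tail _ hstep ih =>
    obtain ⟨q, hpq, rfl⟩ := ih
    obtain ⟨r, hqr, hr⟩ := hα hstep
    exact ⟨r, hpq.tail hqr, hr⟩

theorem surjective_of_fibration_flip (hα : Relation.Fibration (flip E) (flip F) α) {s : V}
    (hs : ∀ w, Relation.ReflTransGen F (α s) w) : Function.Surjective α := by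
  intro w
  obtain ⟨q, -, hq⟩ := fibration_flip_reflTransGen hα (hs w)
  exact ⟨q, hq⟩

theorem OptionPreserving.map_rel (hα : OptionPreserving E F α) ⦃p q : V⦄ (hpq : E p q) :
    F (α p) (α q) :=
  (hα p).superset (Set.mem_image_of_mem α hpq)

theorem OptionPreserving.fibration_flip (hα : OptionPreserving E F α) :
    Relation.Fibration (flip E) (flip F) α :=
  fun p _ hw ↦ (hα p).subset hw

theorem stmt_1_general {sG : V} {sH : W} (hG_unique : ∀ t, IsSource E t → t = sG)
    (hH_source : IsSource F sH) (hH_reach : ∀ w, Relation.ReflTransGen F sH w)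
    (hα : OptionPreserving E F α) : α sG = sH ↔ Function.Surjective α := by
  constructor
  · rintro rfl
    exact surjective_of_fibration_flip hα.fibration_flip hH_reach
  · intro hsurj
    obtain ⟨p, rfl⟩ := hsurj sH
    have hp : IsSource E p := hH_source.of_map hα.map_rel
    rw [hG_unique p hp]

end

/-- An option preserving map between gamegraphs is source preserving iff it is
surjective. -/
theorem stmt_1 {V W : Type*} (E : V → V → Prop) (F : W → W → Prop)
    (sG : V) (sH : W) (hG : IsGamegraph E sG) (hH : IsGamegraph F sH)
    (α : V → W) (hα : OptionPreserving E F α) :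
    α sG = sH ↔ Function.Surjective α :=
  stmt_1_general hG.2.2.1 hH.2.1 hH.2.2.2 hα
end

section
/- Let μ be a map from subsets of a type Y to Y, let f be a μ-valuation on a rulegraph R and g a μ-valuation on a rulegraph S, and let α : R → S be an option preserving map. Then g(α(p)) = f(p) for every vertex p of R. -/
/-!
Pulling a valuation back along an option preserving map gives a valuation, and well-founded
induction along the options shows that a rulegraph carries at most one `μ`-valuation.
-/

theorem NoInfiniteWalk.wellFounded {V : Type*} {E : V → V → Prop} (hE : NoInfiniteWalk E) :
    WellFounded fun q p => E p q :=
  wellFounded_iff_isEmpty_descending_chain.2 ⟨fun ⟨walk, step⟩ => hE ⟨walk, step⟩⟩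

/-- A map `f` on the vertices of a digraph is a `μ`-valuation if its value at each vertex is
computed by `μ` from the set of its values at the options. -/
def IsValuation {V Y : Type*} (μ : Set Y → Y) (E : V → V → Prop) (f : V → Y) : Prop :=
  ∀ p, f p = μ (f '' OptSet E p)

namespace IsValuation

variable {V W Y : Type*} {E : V → V → Prop} {F : W → W → Prop} {μ : Set Y → Y}

theorem comp_optionPreserving {g : W → Y} (hg : IsValuation μ F g) {α : V → W}
    (hα : OptionPreserving E F α) : IsValuation μ E (g ∘ α) := fun p =>
  calc
    g (α p) = μ (g '' OptSet F (α p)) := hg (α p)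
    _ = μ (g ∘ α '' OptSet E p) := by rw [hα p, Set.image_comp]

theorem unique (hE : NoInfiniteWalk E) {f g : V → Y} (hf : IsValuation μ E f)
    (hg : IsValuation μ E g) : f = g := by
  funext p
  induction p using hE.wellFounded.induction with
  | _ p eq_on_options =>
    calc
      f p = μ (f '' OptSet E p) := hf p
      _ = μ (g '' OptSet E p) := congrArg μ (Set.image_congr eq_on_options)
      _ = g p := (hg p).symm

end IsValuation

theorem stmt_2_general {V W Y : Type*} {E : V → V → Prop} {F : W → W → Prop}
    (hR : NoInfiniteWalk E) {μ : Set Y → Y} {f : V → Y} {g : W → Y}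
    (hf : IsValuation μ E f) (hg : IsValuation μ F g)
    {α : V → W} (hα : OptionPreserving E F α) (p : V) : g (α p) = f p :=
  congrFun (IsValuation.unique hR (hg.comp_optionPreserving hα) hf) p

/-- Option preserving maps between rulegraphs preserve valuations. -/
theorem stmt_2 {V W Y : Type*} (E : V → V → Prop) (F : W → W → Prop)
    (hR : NoInfiniteWalk E) (hS : NoInfiniteWalk F)
    (μ : Set Y → Y) (f : V → Y) (g : W → Y)
    (hf : ∀ p, f p = μ (f '' OptSet E p))
    (hg : ∀ q, g q = μ (g '' OptSet F q))
    (α : V → W) (hα : OptionPreserving E F α) :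
    ∀ p : V, g (α p) = f p :=
  stmt_2_general hR hf hg hα
end

section
/- If R is a rulegraph and ∼ is a congruence relation on R, then the quotient digraph R/∼ is a rulegraph, i.e., it has no infinite directed walk. -/
/-!
Having no infinite directed walk means that the option relation, read backwards, is well-founded.
The congruence condition says that an arrow of the quotient lifts to an arrow starting at any
prescribed representative of its tail, so the quotient map is a fibration. Accessibility passes
along fibrations, and every vertex of the quotient is in the image of the quotient map.
-/

theorem noInfiniteWalk_iff_wellFounded {V : Type*} {E : V → V → Prop} :
    NoInfiniteWalk E ↔ WellFounded (flip E) := by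
  rw [wellFounded_iff_isEmpty_descending_chain, isEmpty_subtype]
  exact not_exists

theorem NoInfiniteWalk.of_fibration {V W : Type*} {E : V → V → Prop} {F : W → W → Prop}
    {α : V → W} (hE : NoInfiniteWalk E) (hα : Function.Surjective α)
    (hfib : Relation.Fibration (flip E) (flip F) α) : NoInfiniteWalk F := by
  rw [noInfiniteWalk_iff_wellFounded] at hE ⊢
  exact ⟨hα.forall.2 fun p ↦ (hE.apply p).of_fibration α hfib⟩

theorem IsCongruence.exists_option_rel {V : Type*} {E r : V → V → Prop}
    (hr : IsCongruence E r) {p p' q' : V} (hp : r p p') (hq' : E p' q') :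
    ∃ q, E p q ∧ r q q' := by
  have hmem : cls r q' ∈ cls r '' OptSet E p :=
    hr.2 p p' hp ▸ Set.mem_image_of_mem _ hq'
  obtain ⟨q, hpq, hq⟩ := hmem
  have hq_mem : q' ∈ cls r q := hq ▸ hr.1.refl q'
  exact ⟨q, hpq, hq_mem⟩

theorem IsCongruence.fibration_mk {V : Type*} {E : V → V → Prop} {s : Setoid V}
    (hs : IsCongruence E s.r) :
    Relation.Fibration (flip E) (flip (QuotE E s)) (Quotient.mk s) := by
  rintro p _ ⟨p', q', hp, rfl, hq'⟩
  obtain ⟨q, hpq, hq⟩ := hs.exists_option_rel (Quotient.exact hp.symm) hq'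
  exact ⟨q, hpq, Quotient.sound hq⟩

/-- The quotient of a rulegraph by a congruence relation is a rulegraph. -/
theorem stmt_9 {V : Type*} (E : V → V → Prop) (hR : NoInfiniteWalk E)
    (s : Setoid V) (hcong : IsCongruence E s.r) :
    NoInfiniteWalk (QuotE E s) :=
  hR.of_fibration Quotient.mk_surjective hcong.fibration_mk
end

section
/- (First Isomorphism Theorem for rulegraphs) If α : R → S is an option preserving map between rulegraphs, then the map [p] ↦ α(p) is a well-defined bijective option preserving map from the quotient rulegraph R/ker(α) onto the subdigraph of S induced by the image α(V(R)); in particular R/ker(α) and the image rulegraph α(R) are isomorphic as digraphs. -/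
theorem quotE_mk_mk_iff {V : Type*} {E : V → V → Prop} {s : Setoid V} {p q : V} :
    QuotE E s (Quotient.mk s p) (Quotient.mk s q) ↔ ∃ p' q', s p' p ∧ s q' q ∧ E p' q' := by
  simp only [QuotE, Quotient.eq]

theorem optionPreserving_of_relIso {V W : Type*} {E : V → V → Prop} {F : W → W → Prop}
    (e : E ≃r F) : OptionPreserving E F e := by
  intro p
  ext w
  obtain ⟨q, rfl⟩ := e.surjective w
  rw [e.injective.mem_set_image]
  exact e.map_rel_iff

namespace OptionPreserving

variable {V W : Type*} {E : V → V → Prop} {F : W → W → Prop} {α : V → W}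

theorem rel_apply_iff (hα : OptionPreserving E F α) {p : V} {w : W} :
    F (α p) w ↔ ∃ q, E p q ∧ α q = w :=
  Set.ext_iff.mp (hα p) w

theorem quotE_ker_mk_mk_iff (hα : OptionPreserving E F α) {p q : V} :
    QuotE E (Setoid.ker α) (Quotient.mk _ p) (Quotient.mk _ q) ↔ F (α p) (α q) := by
  simp only [quotE_mk_mk_iff, Setoid.ker_def]
  constructor
  · rintro ⟨p', q', hp, hq, hE⟩
    rw [← hp]
    exact hα.rel_apply_iff.mpr ⟨q', hE, hq⟩
  · intro hF
    -- `α p → α q` lifts to an arrow from `p` itself: only the target moves in its class.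
    obtain ⟨q', hE, hq⟩ := hα.rel_apply_iff.mp hF
    exact ⟨p, q', rfl, hq, hE⟩

/-- The canonical digraph isomorphism `[p] ↦ α p` from the quotient by the kernel of an option
preserving map `α` onto the subdigraph induced by the image of `α`, which is encoded as the
restriction `Subrel` of the ambient arrow relation. -/
noncomputable def quotientKerRelIso (hα : OptionPreserving E F α) :
    QuotE E (Setoid.ker α) ≃r Subrel F (· ∈ Set.range α) where
  toEquiv := Setoid.quotientKerEquivRange α
  map_rel_iff' {a b} := Quotient.inductionOn₂ a b fun _ _ => hα.quotE_ker_mk_mk_iff.symm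

theorem quotientKerRelIso_mk (hα : OptionPreserving E F α) (p : V) :
    hα.quotientKerRelIso (Quotient.mk _ p) = ⟨α p, Set.mem_range_self p⟩ :=
  rfl

end OptionPreserving

theorem stmt_13_general {V W : Type*} (E : V → V → Prop) (F : W → W → Prop)
    (α : V → W) (hα : OptionPreserving E F α) :
    ∃ φ : Quotient (Setoid.ker α) → ↥(Set.range α),
      (∀ p : V, φ (Quotient.mk (Setoid.ker α) p) = ⟨α p, Set.mem_range_self p⟩) ∧
      Function.Bijective φ ∧
      OptionPreserving (QuotE E (Setoid.ker α))
        (fun a b : ↥(Set.range α) => F a.1 b.1) φ ∧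
      ∀ a b : Quotient (Setoid.ker α),
        QuotE E (Setoid.ker α) a b ↔ F (φ a).1 (φ b).1 :=
  ⟨hα.quotientKerRelIso, hα.quotientKerRelIso_mk, hα.quotientKerRelIso.bijective,
    optionPreserving_of_relIso hα.quotientKerRelIso,
    fun _ _ => hα.quotientKerRelIso.map_rel_iff.symm⟩

/-- First Isomorphism Theorem for rulegraphs: for an option preserving map
`α : R → S`, the map `[p] ↦ α p` is a well-defined bijective option preserving
map (indeed a digraph isomorphism) from `R / ker α` onto the subdigraph of `S`
induced by the image of `α`. -/
theorem stmt_13 {V W : Type*} (E : V → V → Prop) (F : W → W → Prop)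
    (hR : NoInfiniteWalk E) (hS : NoInfiniteWalk F)
    (α : V → W) (hα : OptionPreserving E F α) :
    ∃ φ : Quotient (Setoid.ker α) → ↥(Set.range α),
      (∀ p : V, φ (Quotient.mk (Setoid.ker α) p) = ⟨α p, Set.mem_range_self p⟩) ∧
      Function.Bijective φ ∧
      OptionPreserving (QuotE E (Setoid.ker α))
        (fun a b : ↥(Set.range α) => F a.1 b.1) φ ∧
      ∀ a b : Quotient (Setoid.ker α),
        QuotE E (Setoid.ker α) a b ↔ F (φ a).1 (φ b).1 :=
  stmt_13_general E F α hα
end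

section
/- A rulegraph R is simple if and only if the map p ↦ Opt(p) from vertices to sets of vertices is injective, i.e., no two distinct vertices have the same set of options. -/
/-!
Having the same options is itself a congruence, so simplicity forces `OptSet E` to be injective.
Conversely, a congruence is a bisimulation, and arrows can only be followed finitely often: if
related options are equal, then related vertices have the same options, and injectivity makes
them equal.
-/

section

variable {V : Type*} {E r : V → V → Prop} {p q : V}

/-- A bisimulation on the digraph `E`: every option of one of two related vertices is related to
an option of the other. It carries the part of a congruence that is used in inductions along `E`. -/
structure IsBisimulation (E r : V → V → Prop) : Prop where
  forth : ∀ {p q x}, r p q → E p x → ∃ y, E q y ∧ r x y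
  back : ∀ {p q y}, r p q → E q y → ∃ x, E p x ∧ r x y

theorem cls_eq_cls_iff (hr : Equivalence r) : cls r p = cls r q ↔ r p q := by
  refine ⟨fun h => ?_, fun h => Set.ext fun _ => ⟨hr.trans (hr.symm h), hr.trans h⟩⟩
  have hq : q ∈ cls r q := hr.refl q
  rwa [← h] at hq

theorem IsCongruence.isBisimulation (hr : IsCongruence E r) : IsBisimulation E r := by
  have forth {p q x : V} (hpq : r p q) (hx : E p x) : ∃ y, E q y ∧ r x y := by
    have hmem : cls r x ∈ cls r '' OptSet E q := hr.2 p q hpq ▸ Set.mem_image_of_mem _ hx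
    obtain ⟨y, hy, hyx⟩ := hmem
    exact ⟨y, hy, (cls_eq_cls_iff hr.1).mp hyx.symm⟩
  refine ⟨forth, fun hpq hy => ?_⟩
  obtain ⟨x, hx, hyx⟩ := forth (hr.1.symm hpq) hy
  exact ⟨x, hx, hr.1.symm hyx⟩

theorem isCongruence_optSet_eq (E : V → V → Prop) :
    IsCongruence E fun p q => OptSet E p = OptSet E q :=
  ⟨⟨fun _ => rfl, Eq.symm, Eq.trans⟩, fun _ _ h => congrArg _ h⟩

theorem IsSimple.injective_optSet (hE : IsSimple E) : Function.Injective (OptSet E) :=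
  hE _ (isCongruence_optSet_eq E)

theorem NoInfiniteWalk.wellFounded_s15 (hE : NoInfiniteWalk E) : WellFounded (flip E) :=
  wellFounded_iff_isEmpty_descending_chain.mpr ⟨fun f => hE ⟨f.1, f.2⟩⟩

theorem IsBisimulation.optSet_eq (hr : IsBisimulation E r) (hpq : r p q)
    (heq : ∀ x, E p x → ∀ y, r x y → x = y) : OptSet E p = OptSet E q := by
  ext z
  constructor
  · intro hz
    obtain ⟨y, hy, hzy⟩ := hr.forth hpq hz
    exact heq z hz y hzy ▸ hy
  · intro hz
    obtain ⟨x, hx, hxz⟩ := hr.back hpq hz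
    exact heq x hx z hxz ▸ hx

theorem IsBisimulation.eq_of_wellFounded_of_injective (hr : IsBisimulation E r)
    (hwf : WellFounded (flip E)) (hinj : Function.Injective (OptSet E)) (hpq : r p q) :
    p = q := by
  induction p using hwf.induction generalizing q with
  | _ p ih => exact hinj (hr.optSet_eq hpq fun x hx _ hxy => ih x hx hxy)

end

/-- A rulegraph is simple iff no two distinct vertices have the same set of
options. -/
theorem stmt_15 {V : Type*} (E : V → V → Prop) (hR : NoInfiniteWalk E) :
    IsSimple E ↔ Function.Injective (OptSet E) := by
  refine ⟨IsSimple.injective_optSet, fun hinj r hr p q hpq => ?_⟩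
  exact hr.isBisimulation.eq_of_wellFounded_of_injective hR.wellFounded_s15 hinj hpq
end

section
/- Let R be a rulegraph and let ∼ and ≈ be congruence relations on R such that both quotient rulegraphs R/∼ and R/≈ are simple. Then ∼ and ≈ are the same relation. -/
/-!
A quotient map by a congruence relation is option preserving, and the kernel of an option
preserving map is a congruence relation. If `s ≤ t` are congruence relations, the induced map from
the quotient by `s` to the quotient by `t` is option preserving, so it is injective as soon as the
first quotient is simple, and then `s = t`. Since the supremum of all congruence relations is a
congruence relation, one with simple quotient is the greatest congruence relation.
-/

section

variable {V W X : Type*} {E : V → V → Prop} {F : W → W → Prop} {G : X → X → Prop}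

theorem image_cls_ker_eq_iff {f : V → W} {A B : Set V} :
    cls (Setoid.ker f).r '' A = cls (Setoid.ker f).r '' B ↔ f '' A = f '' B := by
  have cls_eq : cls (Setoid.ker f).r = (fun w => {x | w = f x}) ∘ f := rfl
  have injOn : Set.InjOn (fun w => {x | w = f x}) (Set.range f) := by
    rintro _ ⟨p, rfl⟩ w - h
    exact (h.subset (rfl : f p = f p)).symm
  rw [cls_eq, Set.image_comp, Set.image_comp,
    injOn.image_eq_image_iff (Set.image_subset_range f A) (Set.image_subset_range f B)]

theorem isCongruence_ker_iff {f : V → W} :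
    IsCongruence E (Setoid.ker f).r ↔
      ∀ p q, f p = f q → f '' OptSet E p = f '' OptSet E q := by
  simp only [IsCongruence, image_cls_ker_eq_iff]
  exact and_iff_right (Setoid.ker f).iseqv

theorem isCongruence_iff_le_ker_image_mk {s : Setoid V} :
    IsCongruence E s.r ↔ s ≤ Setoid.ker fun p => Quotient.mk s '' OptSet E p := by
  have ker_mk : Setoid.ker (Quotient.mk s) = s := Setoid.ker_mk_eq s
  conv_lhs => rw [← ker_mk]
  simp only [isCongruence_ker_iff, Quotient.eq]
  rfl

theorem isCongruence_sSup {S : Set (Setoid V)} (hS : ∀ s ∈ S, IsCongruence E s.r) :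
    IsCongruence E (sSup S).r := by
  refine isCongruence_iff_le_ker_image_mk.2 (sSup_le fun s hs p q hpq => ?_)
  have image_mk_eq : Quotient.mk s '' OptSet E p = Quotient.mk s '' OptSet E q :=
    isCongruence_iff_le_ker_image_mk.1 (hS s hs) hpq
  have mk_sSup : Quotient.mk (sSup S) = Setoid.map_of_le (le_sSup hs) ∘ Quotient.mk s := rfl
  simp only [Setoid.ker_def, mk_sSup, Set.image_comp, image_mk_eq]

namespace OptionPreserving

theorem isCongruence_ker {α : V → W} (hα : OptionPreserving E F α) :
    IsCongruence E (Setoid.ker α).r :=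
  isCongruence_ker_iff.2 fun p q hpq => by rw [← hα p, ← hα q, hpq]

theorem of_comp {α : V → W} {β : W → X} (hβα : OptionPreserving E G (β ∘ α))
    (hα : OptionPreserving E F α) (hsurj : Function.Surjective α) : OptionPreserving F G β :=
  hsurj.forall.2 fun p => by rw [hα p, ← Set.image_comp, ← hβα p, Function.comp_apply]

end OptionPreserving

theorem IsSimple.injective_of_optionPreserving {β : W → X} (hF : IsSimple F)
    (hβ : OptionPreserving F G β) : Function.Injective β :=
  fun _ _ hab => hF _ hβ.isCongruence_ker _ _ hab

namespace IsCongruence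

variable {s t : Setoid V}

theorem optionPreserving_mk (hs : IsCongruence E s.r) :
    OptionPreserving E (QuotE E s) (Quotient.mk s) := by
  refine fun p => Set.Subset.antisymm ?_ ?_
  · rintro _ ⟨p', q', hp', rfl, hq'⟩
    have image_mk_eq : Quotient.mk s '' OptSet E p' = Quotient.mk s '' OptSet E p :=
      isCongruence_iff_le_ker_image_mk.1 hs (Quotient.exact hp')
    exact image_mk_eq ▸ Set.mem_image_of_mem _ hq'
  · rintro _ ⟨q, hq, rfl⟩
    exact ⟨p, q, rfl, rfl, hq⟩

theorem optionPreserving_map_of_le (hs : IsCongruence E s.r) (ht : IsCongruence E t.r)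
    (hst : s ≤ t) : OptionPreserving (QuotE E s) (QuotE E t) (Setoid.map_of_le hst) :=
  .of_comp ht.optionPreserving_mk hs.optionPreserving_mk Quotient.mk_surjective

theorem eq_of_le_of_isSimple (hs : IsCongruence E s.r) (ht : IsCongruence E t.r) (hst : s ≤ t)
    (hsimple : IsSimple (QuotE E s)) : s = t :=
  have map_injective : Function.Injective (Setoid.map_of_le hst) :=
    hsimple.injective_of_optionPreserving (hs.optionPreserving_map_of_le ht hst)
  hst.antisymm fun _ _ hpq => Quotient.exact (map_injective (Quotient.sound hpq))

theorem isGreatest_of_isSimple (hs : IsCongruence E s.r) (hsimple : IsSimple (QuotE E s)) :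
    IsGreatest {t : Setoid V | IsCongruence E t.r} s := by
  have eq_sSup : s = sSup {t : Setoid V | IsCongruence E t.r} :=
    hs.eq_of_le_of_isSimple (isCongruence_sSup fun _ ht => ht) (le_sSup hs) hsimple
  exact ⟨hs, fun t ht => eq_sSup ▸ le_sSup ht⟩

end IsCongruence

end

theorem stmt_16_general {V : Type*} (E : V → V → Prop) (s₁ s₂ : Setoid V)
    (h₁ : IsCongruence E s₁.r) (h₂ : IsCongruence E s₂.r)
    (hs₁ : IsSimple (QuotE E s₁)) (hs₂ : IsSimple (QuotE E s₂)) : s₁ = s₂ :=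
  (h₁.isGreatest_of_isSimple hs₁).unique (h₂.isGreatest_of_isSimple hs₂)

/-- Two congruence relations with simple quotients coincide. -/
theorem stmt_16 {V : Type*} (E : V → V → Prop) (hR : NoInfiniteWalk E)
    (s₁ s₂ : Setoid V)
    (h₁ : IsCongruence E s₁.r) (h₂ : IsCongruence E s₂.r)
    (hs₁ : IsSimple (QuotE E s₁)) (hs₂ : IsSimple (QuotE E s₂)) :
    ∀ p q : V, s₁.r p q ↔ s₂.r p q :=
  fun _ _ => stmt_16_general E s₁ s₂ h₁ h₂ hs₁ hs₂ ▸ Iff.rfl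
end
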